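/- Let a, b, c, p > 0, let B ∼ Beta(a,b) and W ∼ Gamma(c/p, 1) be independent. Then P(B^p W > w) ∼ (Γ(a+b)/(Γ(c/p)Γ(a))) · p^{-b} · w^{c/p − b − 1} · e^{-w} as w → ∞. -/

import Mathlib

/-!
The product `B ^ p * W` exceeds a large `w` only if `W = w + t` with `t > 0` and `B ^ p` exceeds
`u = w / (w + t)`, which is close to `1`. Conditioning on `W` therefore gives (`prob_eq_integral`),
with `r = c / p`,
`P(B ^ p * W > w) = ∫ t > 0, (w + t) ^ (r - 1) * exp (-(w + t)) / Γ(r) * P(B ^ p > w / (w + t))`.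

Near `1` the Beta tail is a pure power: `P(B ^ p > u) ∼ C / b * p ^ (-b) * (1 - u) ^ b` as `u → 1`,
where `C = Γ(a + b) / (Γ(a) Γ(b))` (`tendsto_betaSurv_rpow`). As `w * (1 - u) = w * t / (w + t) → t`,
factoring out `w ^ (r - 1 - b) * exp (-w) / Γ(r)` leaves an integral whose integrand converges
pointwise to `C / b * p ^ (-b) * t ^ b * exp (-t)`; it is dominated by a multiple of
`(1 + t) ^ |r - 1| * t ^ b * exp (-t)` thanks to the uniform bound `betaSurv_rpow_le`. Dominated
convergence (`tendsto_scaled_integral`) and `∫ t > 0, t ^ b * exp (-t) = Γ(b + 1) = b * Γ(b)` give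
the constant.
-/

open MeasureTheory Filter Real Asymptotics

/-- The Beta(a,b) distribution on ℝ, via its density. -/
noncomputable def betaM (a b : ℝ) : Measure ℝ :=
  volume.withDensity fun x => ENNReal.ofReal
    (if 0 < x ∧ x < 1 then
      x ^ (a - 1) * (1 - x) ^ (b - 1) * (Real.Gamma (a + b) / (Real.Gamma a * Real.Gamma b))
    else 0)

/-- The generalized gamma GG(c,p) distribution on ℝ, via its density. -/
noncomputable def genGammaM (c p : ℝ) : Measure ℝ :=
  volume.withDensity fun x => ENNReal.ofReal
    (if 0 < x then p / Real.Gamma (c / p) * x ^ (c - 1) * Real.exp (-(x ^ p)) else 0)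

/-- The Gamma(r,1) distribution on ℝ, via its density. -/
noncomputable def gammaM (r : ℝ) : Measure ℝ :=
  volume.withDensity fun x => ENNReal.ofReal
    (if 0 < x then x ^ (r - 1) * Real.exp (-x) / Real.Gamma r else 0)

/-- The standard exponential distribution on ℝ, via its density. -/
noncomputable def expM : Measure ℝ :=
  volume.withDensity fun x => ENNReal.ofReal (if 0 < x then Real.exp (-x) else 0)

/-! ### The upper tail of the Beta law at 1 -/

/-- The survival function `s ↦ P(B > s)` of the Beta(a,b) law. -/
noncomputable def betaSurv (a b s : ℝ) : ℝ := (betaM a b).real (Set.Ioi s)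

lemma isProbabilityMeasure_betaM {a b : ℝ} (ha : 0 < a) (hb : 0 < b) :
    IsProbabilityMeasure (betaM a b) := by
  constructor
  rw [betaM, withDensity_apply _ MeasurableSet.univ, Measure.restrict_univ,
    ← ProbabilityTheory.lintegral_betaPDF_eq_one ha hb]
  refine lintegral_congr fun x => ?_
  rw [ProbabilityTheory.betaPDF_eq, ProbabilityTheory.beta]
  congr 1
  split_ifs
  · rw [one_div_div]; ring
  · rfl

lemma betaM_Ioi (a b : ℝ) {s : ℝ} (hs : 0 < s) :
    betaM a b (Set.Ioi s) = ∫⁻ x in Set.Ioo s 1, ENNReal.ofReal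
      (x ^ (a - 1) * (1 - x) ^ (b - 1) * (Real.Gamma (a + b) / (Real.Gamma a * Real.Gamma b))) := by
  rw [betaM, withDensity_apply _ measurableSet_Ioi, ← lintegral_indicator measurableSet_Ioi,
    ← lintegral_indicator measurableSet_Ioo]
  refine lintegral_congr fun x => ?_
  by_cases h1 : s < x
  · by_cases h2 : x < 1
    · simp [Set.indicator, h1, h2, hs.trans h1]
    · simp [Set.indicator, h2]
  · simp [Set.indicator, h1]

lemma lintegral_one_sub_rpow {b s : ℝ} (hb : 0 < b) (hs1 : s < 1) {D : ℝ} (hD : 0 ≤ D) :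
    ∫⁻ x in Set.Ioo s 1, ENNReal.ofReal (D * (1 - x) ^ (b - 1))
      = ENNReal.ofReal (D * ((1 - s) ^ b / b)) := by
  have hint : IntervalIntegrable (fun x : ℝ => (1 - x) ^ (b - 1)) volume s 1 := by
    have := (intervalIntegral.intervalIntegrable_rpow' (a := 1 - s) (b := 1 - 1) (r := b - 1)
      (by linarith)).comp_sub_left 1
    simpa using this
  have hval : ∫ x in s..1, (1 - x) ^ (b - 1) = (1 - s) ^ b / b := by
    rw [intervalIntegral.integral_comp_sub_left (fun x : ℝ => x ^ (b - 1)) 1, sub_self,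
      integral_rpow (Or.inl (by linarith))]
    simp [Real.zero_rpow hb.ne']
  rw [← ofReal_integral_eq_lintegral_ofReal, integral_const_mul,
    ← integral_Ioc_eq_integral_Ioo, ← intervalIntegral.integral_of_le hs1.le, hval]
  · exact ((hint.1).mono_set Set.Ioo_subset_Ioc_self).const_mul D
  · refine (ae_restrict_mem measurableSet_Ioo).mono fun x hx => ?_
    have : 0 < 1 - x := by linarith [hx.2]
    positivity

/-- On `(s, 1)` the factor `x ^ (a - 1)` of the Beta density lies between `1` and `s ^ (a - 1)`, in
an order depending on the sign of `a - 1`; the other factor integrates to `(1 - s) ^ b / b`. -/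
lemma betaSurv_bounds {a b : ℝ} (ha : 0 < a) (hb : 0 < b) {s : ℝ} (hs : 0 < s) (hs1 : s < 1) :
    Real.Gamma (a + b) / (Real.Gamma a * Real.Gamma b) * min 1 (s ^ (a - 1)) *
        ((1 - s) ^ b / b) ≤ betaSurv a b s ∧
      betaSurv a b s ≤ Real.Gamma (a + b) / (Real.Gamma a * Real.Gamma b) *
        max 1 (s ^ (a - 1)) * ((1 - s) ^ b / b) := by
  have := isProbabilityMeasure_betaM ha hb
  have hΓa := Real.Gamma_pos_of_pos ha
  have hΓb := Real.Gamma_pos_of_pos hb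
  have hΓab := Real.Gamma_pos_of_pos (add_pos ha hb)
  set C := Real.Gamma (a + b) / (Real.Gamma a * Real.Gamma b) with hC
  have hC0 : 0 < C := by positivity
  have hsp : 0 < s ^ (a - 1) := by positivity
  have key : ∀ x ∈ Set.Ioo s 1, min 1 (s ^ (a - 1)) ≤ x ^ (a - 1) ∧
      x ^ (a - 1) ≤ max 1 (s ^ (a - 1)) := by
    intro x hx
    have hx0 : 0 < x := hs.trans hx.1
    rcases le_total 0 (a - 1) with h | h
    · exact ⟨min_le_of_right_le (Real.rpow_le_rpow hs.le hx.1.le h),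
        le_max_of_le_left (Real.rpow_le_one hx0.le hx.2.le h)⟩
    · exact ⟨min_le_of_left_le (Real.one_le_rpow_of_pos_of_le_one_of_nonpos hx0 hx.2.le h),
        le_max_of_le_right (Real.rpow_le_rpow_of_nonpos hs hx.1.le h)⟩
  have h1s : 0 < 1 - s := by linarith
  have hmin : 0 < min 1 (s ^ (a - 1)) := lt_min one_pos hsp
  have hmax : 0 < max 1 (s ^ (a - 1)) := lt_max_of_lt_left one_pos
  constructor
  · rw [betaSurv, measureReal_def, ← ENNReal.ofReal_le_iff_le_toReal (measure_ne_top _ _),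
      ← lintegral_one_sub_rpow hb hs1 (by positivity), betaM_Ioi a b hs]
    refine setLIntegral_mono' measurableSet_Ioo fun x hx => ENNReal.ofReal_le_ofReal ?_
    have h1x : 0 < 1 - x := by linarith [hx.2]
    have := mul_le_mul_of_nonneg_right (key x hx).1
      (by positivity : 0 ≤ C * (1 - x) ^ (b - 1))
    linarith
  · rw [betaSurv, measureReal_def]
    refine ENNReal.toReal_le_of_le_ofReal (by positivity) ?_
    rw [← lintegral_one_sub_rpow hb hs1 (by positivity), betaM_Ioi a b hs]
    refine setLIntegral_mono' measurableSet_Ioo fun x hx => ENNReal.ofReal_le_ofReal ?_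
    have h1x : 0 < 1 - x := by linarith [hx.2]
    have := mul_le_mul_of_nonneg_right (key x hx).2
      (by positivity : 0 ≤ C * (1 - x) ^ (b - 1))
    linarith

lemma tendsto_betaSurv {a b : ℝ} (ha : 0 < a) (hb : 0 < b) :
    Tendsto (fun s => betaSurv a b s / (1 - s) ^ b) (nhdsWithin 1 (Set.Iio 1))
      (nhds (Real.Gamma (a + b) / (Real.Gamma a * Real.Gamma b) / b)) := by
  set C := Real.Gamma (a + b) / (Real.Gamma a * Real.Gamma b) with hC
  have hpow : Tendsto (fun s : ℝ => s ^ (a - 1)) (nhdsWithin 1 (Set.Iio 1)) (nhds 1) := by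
    have : ContinuousAt (fun s : ℝ => s ^ (a - 1)) 1 :=
      Real.continuousAt_rpow_const _ _ (Or.inl one_ne_zero)
    simpa using this.tendsto.mono_left nhdsWithin_le_nhds
  have hmin : Tendsto (fun s : ℝ => C * min 1 (s ^ (a - 1)) / b) (nhdsWithin 1 (Set.Iio 1))
      (nhds (C / b)) := by
    simpa using ((tendsto_const_nhds (x := (1 : ℝ)).min hpow).const_mul C).div_const b
  have hmax : Tendsto (fun s : ℝ => C * max 1 (s ^ (a - 1)) / b) (nhdsWithin 1 (Set.Iio 1))
      (nhds (C / b)) := by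
    simpa using ((tendsto_const_nhds (x := (1 : ℝ)).max hpow).const_mul C).div_const b
  have hev : ∀ᶠ s : ℝ in nhdsWithin 1 (Set.Iio 1), s ∈ Set.Ioo (0 : ℝ) 1 :=
    Ioo_mem_nhdsLT one_pos
  refine tendsto_of_tendsto_of_tendsto_of_le_of_le' hmin hmax ?_ ?_
  · filter_upwards [hev] with s hs
    have h1s : 0 < 1 - s := by linarith [hs.2]
    rw [le_div_iff₀ (by positivity)]
    refine le_of_eq_of_le ?_ (betaSurv_bounds ha hb hs.1 hs.2).1
    rw [← hC]; ring
  · filter_upwards [hev] with s hs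
    have h1s : 0 < 1 - s := by linarith [hs.2]
    rw [div_le_iff₀ (by positivity)]
    refine le_of_le_of_eq (betaSurv_bounds ha hb hs.1 hs.2).2 ?_
    rw [← hC]; ring

/-- The tail of `B ^ p` at `1`: since `1 - u ^ (1/p) ∼ (1 - u) / p` as `u → 1`, passing from `B` to
`B ^ p` multiplies the constant by `p ^ (-b)`. -/
lemma tendsto_betaSurv_rpow {a b p : ℝ} (ha : 0 < a) (hb : 0 < b) (hp : 0 < p) :
    Tendsto (fun u => betaSurv a b (u ^ p⁻¹) / (1 - u) ^ b) (nhdsWithin 1 (Set.Iio 1))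
      (nhds (Real.Gamma (a + b) / (Real.Gamma a * Real.Gamma b) / b * p ^ (-b))) := by
  have hev : ∀ᶠ s : ℝ in nhdsWithin 1 (Set.Iio 1), s ∈ Set.Ioo (0 : ℝ) 1 :=
    Ioo_mem_nhdsLT one_pos
  have hpow : Tendsto (fun s : ℝ => s ^ p⁻¹) (nhdsWithin 1 (Set.Iio 1))
      (nhdsWithin 1 (Set.Iio 1)) := by
    refine tendsto_nhdsWithin_iff.2 ⟨?_, ?_⟩
    · have : ContinuousAt (fun s : ℝ => s ^ p⁻¹) 1 :=
        Real.continuousAt_rpow_const _ _ (Or.inl one_ne_zero)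
      simpa using this.tendsto.mono_left nhdsWithin_le_nhds
    · filter_upwards [hev] with s hs
      exact Real.rpow_lt_one hs.1.le hs.2 (by positivity)
  have hslope : Tendsto (fun u : ℝ => (1 - u ^ p⁻¹) / (1 - u)) (nhdsWithin 1 (Set.Iio 1))
      (nhds p⁻¹) := by
    have hd : HasDerivAt (fun u : ℝ => u ^ p⁻¹) p⁻¹ 1 := by
      simpa using Real.hasDerivAt_rpow_const (x := (1 : ℝ)) (p := p⁻¹) (Or.inl one_ne_zero)
    have := (hasDerivAt_iff_tendsto_slope.1 hd).mono_left
      (nhdsWithin_mono 1 (fun x (hx : x < 1) => hx.ne))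
    refine this.congr fun u => ?_
    rw [slope_def_field, Real.one_rpow, ← neg_sub, ← neg_sub 1 u, neg_div_neg_eq]
  have h := ((tendsto_betaSurv ha hb).comp hpow).mul
    (hslope.rpow_const (p := b) (Or.inr hb.le))
  rw [Real.inv_rpow hp.le, ← Real.rpow_neg hp.le] at h
  refine h.congr' ?_
  filter_upwards [hev] with u hu
  have h1 : 0 < 1 - u := by linarith [hu.2]
  have h2 : 0 < 1 - u ^ p⁻¹ := by
    linarith [Real.rpow_lt_one hu.1.le hu.2 (inv_pos.2 hp)]
  simp only [Function.comp]
  rw [Real.div_rpow h2.le h1.le]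
  rw [div_mul_div_cancel₀ (Real.rpow_pos_of_pos h2 b).ne']

/-- The asymptotic rate of the tail of `B ^ p` at `1` is also a bound on all of `(0, 1)`, because away
from `1` the power `(1 - u) ^ b` is bounded below. This provides the dominating function. -/
lemma betaSurv_rpow_le {a b p : ℝ} (ha : 0 < a) (hb : 0 < b) (hp : 0 < p) :
    ∃ K, 0 ≤ K ∧ ∀ u ∈ Set.Ioo (0 : ℝ) 1, betaSurv a b (u ^ p⁻¹) ≤ K * (1 - u) ^ b := by
  have := isProbabilityMeasure_betaM ha hb
  set L := Real.Gamma (a + b) / (Real.Gamma a * Real.Gamma b) / b * p ^ (-b)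
  have hev := (tendsto_betaSurv_rpow ha hb hp).eventually (eventually_le_nhds (lt_add_one L))
  obtain ⟨u₀, hu₀, hsub⟩ := mem_nhdsLT_iff_exists_Ioo_subset.1 hev
  have hu₀ : u₀ < 1 := hu₀
  have h0 : 0 < 1 - u₀ := by linarith
  refine ⟨max (L + 1) ((1 - u₀) ^ b)⁻¹, le_max_of_le_right (by positivity), fun u hu => ?_⟩
  have h1 : 0 < 1 - u := by linarith [hu.2]
  rcases lt_or_ge u₀ u with h | h
  · have h3 : betaSurv a b (u ^ p⁻¹) / (1 - u) ^ b ≤ L + 1 := hsub ⟨h, hu.2⟩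
    rw [div_le_iff₀ (by positivity)] at h3
    exact h3.trans (mul_le_mul_of_nonneg_right (le_max_left _ _) (by positivity))
  · calc betaSurv a b (u ^ p⁻¹) ≤ 1 := measureReal_le_one
      _ = ((1 - u₀) ^ b)⁻¹ * (1 - u₀) ^ b := by field_simp
      _ ≤ ((1 - u₀) ^ b)⁻¹ * (1 - u) ^ b := by
        gcongr
      _ ≤ _ := mul_le_mul_of_nonneg_right (le_max_right _ _) (by positivity)

lemma measurable_betaSurv {a b : ℝ} (ha : 0 < a) (hb : 0 < b) : Measurable (betaSurv a b) := by
  have := isProbabilityMeasure_betaM ha hb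
  refine Antitone.measurable fun s t hst => ?_
  exact measureReal_mono (Set.Ioi_subset_Ioi hst)

lemma betaSurv_of_one_le (a b : ℝ) {s : ℝ} (hs : 1 ≤ s) : betaSurv a b s = 0 := by
  rw [betaSurv, measureReal_def, betaM_Ioi a b (by linarith), Set.Ioo_eq_empty (by linarith)]
  simp

/-! ### The tail probability as an integral -/

/-- `P(B ^ p * y > w) = P(B > (w / y) ^ (1/p))` for `y > 0`. The sets differ at negative points, where
the real power is a convention, but these are null for the Beta law. -/
lemma betaM_section {a b p w y : ℝ} (ha : 0 < a) (hb : 0 < b) (hp : 0 < p) (hw : 0 < w)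
    (hy : 0 < y) :
    betaM a b {x | x ^ p * y > w} = ENNReal.ofReal (betaSurv a b ((w / y) ^ p⁻¹)) := by
  have := isProbabilityMeasure_betaM ha hb
  rw [betaSurv, ofReal_measureReal]
  have hpos : ∀ᵐ x ∂(betaM a b), 0 < x := by
    rw [betaM, ae_withDensity_iff]
    · refine ae_of_all _ fun x hx => ?_
      by_contra h
      simp [h] at hx
    · refine ENNReal.measurable_ofReal.comp (Measurable.ite measurableSet_Ioo ?_ ?_) <;> fun_prop
  refine measure_congr ?_
  filter_upwards [hpos] with x hx
  have hwy : 0 < w / y := by positivity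
  refine propext ?_
  change w < x ^ p * y ↔ (w / y) ^ p⁻¹ < x
  rw [← div_lt_iff₀ hy, Real.rpow_inv_lt_iff_of_pos hwy.le hx.le hp]

/-- Conditioning on `W = w + t`; values `W ≤ w` do not contribute since `B ^ p ≤ 1`. -/
lemma prob_eq_integral {a b p r w : ℝ} (ha : 0 < a) (hb : 0 < b) (hp : 0 < p) (hr : 0 < r)
    (hw : 0 < w) :
    (((betaM a b).prod (gammaM r)) {q : ℝ × ℝ | q.1 ^ p * q.2 > w}).toReal =
      ∫ t in Set.Ioi (0 : ℝ), (w + t) ^ (r - 1) * Real.exp (-(w + t)) / Real.Gamma r *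
        betaSurv a b ((w / (w + t)) ^ p⁻¹) := by
  have := isProbabilityMeasure_betaM ha hb
  have hΓ := Real.Gamma_pos_of_pos hr
  have hmeas := measurable_betaSurv ha hb
  have hS : MeasurableSet {q : ℝ × ℝ | q.1 ^ p * q.2 > w} :=
    measurableSet_lt measurable_const (by fun_prop)
  have hsf : SFinite (gammaM r) := by unfold gammaM; infer_instance
  have hmd : Measurable fun x : ℝ => ENNReal.ofReal
      (if 0 < x then x ^ (r - 1) * Real.exp (-x) / Real.Gamma r else 0) :=
    ENNReal.measurable_ofReal.comp
      (Measurable.ite measurableSet_Ioi (by fun_prop) measurable_const)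
  rw [Measure.prod_apply_symm hS]
  have hsm : Measurable fun y => betaM a b ((fun x => (x, y)) ⁻¹' {q : ℝ × ℝ | q.1 ^ p * q.2 > w}) :=
    measurable_measure_prodMk_right hS
  rw [gammaM, lintegral_withDensity_eq_lintegral_mul _ hmd hsm]
  have hg : ∀ y : ℝ, ((fun x : ℝ => ENNReal.ofReal
      (if 0 < x then x ^ (r - 1) * Real.exp (-x) / Real.Gamma r else 0)) * fun y =>
        betaM a b ((fun x => (x, y)) ⁻¹' {q : ℝ × ℝ | q.1 ^ p * q.2 > w})) y =
      (Set.Ioi w).indicator (fun y => ENNReal.ofReal (y ^ (r - 1) * Real.exp (-y) / Real.Gamma r *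
        betaSurv a b ((w / y) ^ p⁻¹))) y := by
    intro y
    simp only [Pi.mul_apply, Set.indicator, Set.mem_Ioi, Set.preimage_ofPred_eq]
    by_cases hy : 0 < y
    · rw [betaM_section ha hb hp hw hy, if_pos hy, ← ENNReal.ofReal_mul (by positivity)]
      split_ifs with h
      · rfl
      · have h1 : 1 ≤ (w / y) ^ p⁻¹ :=
          Real.one_le_rpow ((one_le_div hy).2 (not_lt.1 h)) (by positivity)
        rw [betaSurv_of_one_le a b h1]; simp
    · rw [if_neg hy, if_neg (by linarith)]; simp
  rw [lintegral_congr hg, lintegral_indicator measurableSet_Ioi, ← integral_eq_lintegral_of_nonneg_ae]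
  · have := (measurePreserving_add_left volume w).setIntegral_preimage_emb
      (measurableEmbedding_addLeft w)
      (fun y => y ^ (r - 1) * Real.exp (-y) / Real.Gamma r * betaSurv a b ((w / y) ^ p⁻¹))
      (Set.Ioi w)
    rw [Set.preimage_const_add_Ioi, sub_self] at this
    exact this.symm
  · refine (ae_restrict_mem measurableSet_Ioi).mono fun y hy => ?_
    have hy0 : 0 < y := hw.trans hy
    have : 0 ≤ betaSurv a b ((w / y) ^ p⁻¹) := measureReal_nonneg
    simp only [Pi.zero_apply]
    positivity
  · refine Measurable.aestronglyMeasurable ?_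
    exact (by fun_prop : Measurable fun y : ℝ => y ^ (r - 1) * Real.exp (-y) / Real.Gamma r).mul
      (hmeas.comp (by fun_prop))

/-! ### The limit of the scaled integral -/

lemma integrable_dominating (m b : ℝ) (hb : 0 ≤ b) :
    IntegrableOn (fun t : ℝ => (1 + t) ^ m * t ^ b * Real.exp (-t)) (Set.Ioi 0) := by
  refine integrable_of_isBigO_exp_neg (b := 1 / 2) (by norm_num) ?_ ?_
  · refine ContinuousOn.mul (ContinuousOn.mul ?_ ?_) (by fun_prop)
    · refine ContinuousOn.rpow_const (by fun_prop) fun x (hx : 0 ≤ x) => Or.inl (by linarith)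
    · exact ContinuousOn.rpow_const (by fun_prop) fun x _ => Or.inr hb
  · have hb1 : (fun t : ℝ => t ^ b) =o[atTop] fun t : ℝ => Real.exp (1 / 4 * t) :=
      isLittleO_rpow_exp_pos_mul_atTop b (by norm_num)
    have hb2 : (fun t : ℝ => (1 + t) ^ m) =o[atTop] fun t : ℝ => Real.exp (1 / 4 * (1 + t)) :=
      (isLittleO_rpow_exp_pos_mul_atTop m (by norm_num)).comp_tendsto
        (tendsto_atTop_add_const_left atTop 1 tendsto_id)
    refine ((hb2.isBigO.mul hb1.isBigO).mul
      (isBigO_refl (fun t : ℝ => Real.exp (-t)) atTop)).trans ?_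
    refine IsBigO.of_bound (Real.exp (1 / 4)) (Eventually.of_forall fun t => ?_)
    simp only [Real.norm_eq_abs, Real.abs_exp, ← Real.exp_add]
    refine le_of_eq ?_
    congr 1; ring

/-- The tail probability divided by `w ^ (r - b - 1) * exp (-w) / Γ(r)`, in the limit `w → ∞`. The
limiting integrand is `exp (-t) * t ^ b` times a constant, whence a factor `Γ(b + 1)`. -/
lemma tendsto_scaled_integral {a b p r : ℝ} (ha : 0 < a) (hb : 0 < b) (hp : 0 < p) :
    Tendsto (fun w : ℝ => ∫ t in Set.Ioi (0 : ℝ), (1 + t / w) ^ (r - 1) * Real.exp (-t) *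
        (w ^ b * betaSurv a b ((w / (w + t)) ^ p⁻¹))) atTop
      (nhds (Real.Gamma (a + b) / Real.Gamma a * p ^ (-b))) := by
  obtain ⟨K, hK0, hK⟩ := betaSurv_rpow_le ha hb hp
  have hmeas := measurable_betaSurv ha hb
  have hΓa := Real.Gamma_pos_of_pos ha
  have hΓb := Real.Gamma_pos_of_pos hb
  set L := Real.Gamma (a + b) / (Real.Gamma a * Real.Gamma b) / b * p ^ (-b) with hL
  have hlim : ∫ t in Set.Ioi (0 : ℝ), Real.exp (-t) * t ^ b * L =
      Real.Gamma (a + b) / Real.Gamma a * p ^ (-b) := by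
    have h := Real.Gamma_eq_integral (s := b + 1) (by positivity)
    rw [add_sub_cancel_right] at h
    rw [integral_mul_const, ← h, Real.Gamma_add_one hb.ne', hL]
    field_simp
  rw [← hlim]
  refine tendsto_integral_filter_of_dominated_convergence
    (fun t => K * ((1 + t) ^ |r - 1| * t ^ b * Real.exp (-t))) ?_ ?_
    ((integrable_dominating _ b hb.le).const_mul K) ?_
  · refine Eventually.of_forall fun w => Measurable.aestronglyMeasurable ?_
    exact (by fun_prop : Measurable fun t : ℝ => (1 + t / w) ^ (r - 1) * Real.exp (-t)).mul
      ((hmeas.comp (by fun_prop)).const_mul _)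
  · filter_upwards [eventually_ge_atTop 1] with w hw
    refine (ae_restrict_mem measurableSet_Ioi).mono fun t (ht : 0 < t) => ?_
    have hw0 : 0 < w := by linarith
    have hnn : 0 ≤ betaSurv a b ((w / (w + t)) ^ p⁻¹) := measureReal_nonneg
    rw [Real.norm_of_nonneg (by positivity)]
    have hu : w / (w + t) ∈ Set.Ioo (0 : ℝ) 1 :=
      ⟨by positivity, (div_lt_one (by positivity)).2 (by linarith)⟩
    have h1 : (1 + t / w) ^ (r - 1) ≤ (1 + t) ^ |r - 1| := by
      have h0 : 0 ≤ t / w := by positivity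
      calc (1 + t / w) ^ (r - 1) ≤ (1 + t / w) ^ |r - 1| :=
            Real.rpow_le_rpow_of_exponent_le (by linarith) (le_abs_self _)
        _ ≤ _ := by
            refine Real.rpow_le_rpow (by positivity) ?_ (abs_nonneg _)
            have := div_le_self ht.le hw
            linarith
    have h2 : w ^ b * betaSurv a b ((w / (w + t)) ^ p⁻¹) ≤ K * t ^ b := by
      have h1u : 0 ≤ 1 - w / (w + t) := by linarith [hu.2]
      calc w ^ b * betaSurv a b ((w / (w + t)) ^ p⁻¹)
          ≤ w ^ b * (K * (1 - w / (w + t)) ^ b) := by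
            gcongr
            exact hK _ hu
        _ = K * (w * (1 - w / (w + t))) ^ b := by rw [Real.mul_rpow hw0.le h1u]; ring
        _ ≤ K * t ^ b := by
            gcongr
            have : w * (1 - w / (w + t)) = t * (w / (w + t)) := by field_simp; ring
            rw [this]
            exact mul_le_of_le_one_right ht.le hu.2.le
    calc _ ≤ (1 + t) ^ |r - 1| * Real.exp (-t) * (K * t ^ b) := by gcongr
      _ = _ := by ring
  · refine (ae_restrict_mem measurableSet_Ioi).mono fun t (ht : 0 < t) => ?_
    have hdiv : Tendsto (fun w : ℝ => t / w) atTop (nhds 0) :=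
      tendsto_const_nhds.div_atTop tendsto_id
    have hpow : Tendsto (fun w : ℝ => (1 + t / w) ^ (r - 1)) atTop (nhds 1) := by
      have h : Tendsto (fun w : ℝ => 1 + t / w) atTop (nhds 1) := by
        simpa using hdiv.const_add 1
      simpa using h.rpow_const (p := r - 1) (Or.inl one_ne_zero)
    have hu : Tendsto (fun w : ℝ => w / (w + t)) atTop (nhds 1) := by
      have h : Tendsto (fun w : ℝ => (1 + t / w)⁻¹) atTop (nhds 1) := by
        simpa using (hdiv.const_add 1).inv₀ (by norm_num)
      refine h.congr' ?_
      filter_upwards [eventually_gt_atTop 0] with w hw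
      field_simp
    have hu' : Tendsto (fun w : ℝ => w / (w + t)) atTop (nhdsWithin 1 (Set.Iio 1)) := by
      refine tendsto_nhdsWithin_iff.2 ⟨hu, ?_⟩
      filter_upwards [eventually_gt_atTop 0] with w hw
      have hwt : 0 < w + t := by positivity
      exact (div_lt_one hwt).2 (by linarith)
    have hT := (tendsto_betaSurv_rpow ha hb hp).comp hu'
    -- With `u = w / (w + t)` one has `t * u = w * (1 - u)`, so that `w ^ b * P(B ^ p > u)` is
    -- `(t * u) ^ b` times the ratio whose limit at `u → 1` is known.
    have htb : Tendsto (fun w : ℝ => (t * (w / (w + t))) ^ b) atTop (nhds (t ^ b)) := by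
      simpa using (hu.const_mul t).rpow_const (p := b) (Or.inr hb.le)
    have h := (hpow.mul_const (Real.exp (-t))).mul (htb.mul hT)
    rw [one_mul, ← hL, ← mul_assoc] at h
    refine h.congr' ?_
    filter_upwards [eventually_gt_atTop 0] with w hw
    have h1u : 1 - w / (w + t) = t / (w + t) := by field_simp; ring
    have hq : 0 < t / (w + t) := by positivity
    have h2 : t * (w / (w + t)) = w * (t / (w + t)) := by ring
    simp only [Function.comp]
    rw [h1u, h2, Real.mul_rpow hw.le hq.le]
    have := Real.rpow_pos_of_pos hq b
    field_simp

theorem beta_pow_gamma_tail (a b c p : ℝ) (ha : 0 < a) (hb : 0 < b) (hc : 0 < c) (hp : 0 < p) :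
    Tendsto (fun w : ℝ =>
        (((betaM a b).prod (gammaM (c / p))) {q : ℝ × ℝ | q.1 ^ p * q.2 > w}).toReal /
          (Real.Gamma (a + b) / (Real.Gamma (c / p) * Real.Gamma a) * p ^ (-b) *
            w ^ (c / p - b - 1) * Real.exp (-w)))
      atTop (nhds 1) := by
  have hr : 0 < c / p := by positivity
  set r := c / p
  have hΓr := Real.Gamma_pos_of_pos hr
  have hΓa := Real.Gamma_pos_of_pos ha
  have hΓab := Real.Gamma_pos_of_pos (add_pos ha hb)
  have hM : 0 < Real.Gamma (a + b) / Real.Gamma a * p ^ (-b) := by positivity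
  have h := (tendsto_scaled_integral (r := r) ha hb hp).div_const
    (Real.Gamma (a + b) / Real.Gamma a * p ^ (-b))
  rw [div_self hM.ne'] at h
  refine h.congr' ?_
  filter_upwards [eventually_gt_atTop 0] with w hw
  rw [prob_eq_integral ha hb hp hr hw]
  have hI : ∫ t in Set.Ioi (0 : ℝ), (w + t) ^ (r - 1) * Real.exp (-(w + t)) / Real.Gamma r *
        betaSurv a b ((w / (w + t)) ^ p⁻¹) =
      (w ^ (r - b - 1) * Real.exp (-w) / Real.Gamma r) *
        ∫ t in Set.Ioi (0 : ℝ), (1 + t / w) ^ (r - 1) * Real.exp (-t) *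
        (w ^ b * betaSurv a b ((w / (w + t)) ^ p⁻¹)) := by
    rw [← integral_const_mul]
    refine setIntegral_congr_fun measurableSet_Ioi fun t (ht : 0 < t) => ?_
    have h1 : w + t = w * (1 + t / w) := by field_simp
    have h2 : (w + t) ^ (r - 1) = w ^ (r - b - 1) * w ^ b * (1 + t / w) ^ (r - 1) := by
      rw [h1, Real.mul_rpow hw.le (by positivity), ← Real.rpow_add hw]
      congr 2; ring
    rw [h2, neg_add, Real.exp_add]
    ring
  rw [hI]
  generalize (∫ t in Set.Ioi (0 : ℝ), (1 + t / w) ^ (r - 1) * Real.exp (-t) *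
    (w ^ b * betaSurv a b ((w / (w + t)) ^ p⁻¹))) = J
  have := Real.rpow_pos_of_pos hw (r - b - 1)
  have := Real.exp_pos (-w)
  field_simp
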